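/- Let H = K_{p,q} be the complete bipartite graph on p + q = n vertices, with p, q ≥ 1. Then its coronal is χ_H(λ) = (nλ + 2pq)/(λ² − pq) = ((p+q)λ + 2pq)/(λ² − pq) in ℂ(λ). -/

import Mathlib

open Matrix Polynomial

/-- The characteristic matrix `λ I - B` of `B`, over the field `ℂ(λ)` of rational functions. -/
noncomputable def charMatRatFunc {V : Type*} [Fintype V] [DecidableEq V]
    (B : Matrix V V ℂ) : Matrix V V (RatFunc ℂ) :=
  Matrix.scalar V (RatFunc.X : RatFunc ℂ) - B.map (algebraMap ℂ (RatFunc ℂ))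

/-- The coronal of a matrix `B`: the sum of the entries of `(λ I - B)⁻¹` over `ℂ(λ)`. -/
noncomputable def coronal {V : Type*} [Fintype V] [DecidableEq V]
    (B : Matrix V V ℂ) : RatFunc ℂ :=
  ∑ i, ∑ j, (charMatRatFunc B)⁻¹ i j

/-- The adjacency matrix of the corona `G ∘ H`. -/
def coronaMatrix {α β : Type*} (A : Matrix α α ℂ) (B : Matrix β β ℂ)
    [DecidableEq α] :
    Matrix (α ⊕ β × α) (α ⊕ β × α) ℂ :=
  Matrix.fromBlocks A
    (Matrix.of fun i p => if i = p.2 then 1 else 0)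
    (Matrix.of fun p j => if p.2 = j then 1 else 0)
    (Matrix.of fun p q => if p.2 = q.2 then B p.1 q.1 else 0)


/-- The adjacency matrix of the complete bipartite graph `K_{p,q}`:
the block matrix `[[0_{p,p}, 1_{p,q}], [1_{q,p}, 0_{q,q}]]`. -/
def completeBipartiteMatrix (p q : ℕ) : Matrix (Fin p ⊕ Fin q) (Fin p ⊕ Fin q) ℂ :=
  Matrix.fromBlocks 0 (Matrix.of fun _ _ => 1) (Matrix.of fun _ _ => 1) 0

theorem charMatRatFunc_det_ne_zero {V : Type*} [Fintype V] [DecidableEq V]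
    (B : Matrix V V ℂ) : (charMatRatFunc B).det ≠ 0 := by
  have h : charMatRatFunc B = (algebraMap ℂ[X] (RatFunc ℂ)).mapMatrix (charmatrix B) := by
    ext i j
    by_cases hij : i = j
    · subst hij
      simp [charMatRatFunc, charmatrix, RatFunc.algebraMap_X, RatFunc.algebraMap_C,
        RatFunc.algebraMap_eq_C]
    · simp [charMatRatFunc, charmatrix, hij, RatFunc.algebraMap_C, RatFunc.algebraMap_eq_C]
  rw [h, ← RingHom.map_det]
  intro h0
  have h1 := (map_eq_zero_iff _ (RatFunc.algebraMap_injective ℂ)).1 h0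
  exact (Matrix.charpoly_monic B).ne_zero h1

theorem ratFunc_X_sq_sub_ne_zero (p q : ℕ) :
    (RatFunc.X ^ 2 - (p : RatFunc ℂ) * (q : RatFunc ℂ)) ≠ 0 := by
  have h : (RatFunc.X ^ 2 - (p : RatFunc ℂ) * (q : RatFunc ℂ)) =
      algebraMap ℂ[X] (RatFunc ℂ) (X ^ 2 - C ((p : ℂ) * q)) := by
    simp [RatFunc.algebraMap_X]
  rw [h]
  intro h0
  have h1 := (map_eq_zero_iff _ (RatFunc.algebraMap_injective ℂ)).1 h0
  exact (monic_X_pow_sub_C ((p : ℂ) * q) two_ne_zero).ne_zero h1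

/-- The coronal of the complete bipartite graph `K_{p,q}` on `n = p + q` vertices is
`((p + q)λ + 2pq) / (λ² - pq)`. -/
theorem coronal_completeBipartite (p q : ℕ) (hp : 1 ≤ p) (hq : 1 ≤ q) :
    coronal (completeBipartiteMatrix p q) =
      (((p : RatFunc ℂ) + (q : RatFunc ℂ)) * RatFunc.X + 2 * (p : RatFunc ℂ) * (q : RatFunc ℂ)) /
        (RatFunc.X ^ 2 - (p : RatFunc ℂ) * (q : RatFunc ℂ)) := by
  have hD := ratFunc_X_sq_sub_ne_zero p q
  set D : RatFunc ℂ := RatFunc.X ^ 2 - (p : RatFunc ℂ) * (q : RatFunc ℂ) with hDdef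
  have hdet := charMatRatFunc_det_ne_zero (completeBipartiteMatrix p q)
  let v : Fin p ⊕ Fin q → RatFunc ℂ :=
    Sum.elim (fun _ => (RatFunc.X + (q : RatFunc ℂ)) / D) (fun _ => (RatFunc.X + (p : RatFunc ℂ)) / D)
  have hv : charMatRatFunc (completeBipartiteMatrix p q) *ᵥ v = fun _ => 1 := by
    unfold charMatRatFunc
    rw [Matrix.sub_mulVec]
    funext i
    rcases i with i | i
    · simp [Matrix.mulVec, dotProduct, completeBipartiteMatrix, v, Matrix.diagonal_apply]
      field_simp
      rw [hDdef]; ring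
    · simp [Matrix.mulVec, dotProduct, completeBipartiteMatrix, v, Matrix.diagonal_apply]
      field_simp
      rw [hDdef]; ring
  have hinv : (charMatRatFunc (completeBipartiteMatrix p q))⁻¹ *ᵥ (fun _ => 1) = v := by
    rw [← hv, Matrix.mulVec_mulVec, Matrix.nonsing_inv_mul _ (isUnit_iff_ne_zero.2 hdet),
      Matrix.one_mulVec]
  have hs : coronal (completeBipartiteMatrix p q) = ∑ i, v i := by
    rw [← hinv]
    simp [coronal, Matrix.mulVec, dotProduct]
  rw [hs]
  simp [v]
  field_simp
  ring
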